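/- Let T be a finite connected acyclic simple graph (a tree) with at least one edge, and let k be a natural number. T contains no path on 2k+3 vertices as a subgraph if and only if there exists an edge xy of T such that every vertex u of T satisfies min(dist(u,x), dist(u,y)) ≤ k. -/

import Mathlib

/-- `G` contains a path on `n` vertices as a subgraph: `n` distinct vertices
joined consecutively by edges. -/
def HasPathOn {V : Type*} (G : SimpleGraph V) (n : ℕ) : Prop :=
  ∃ f : Fin n → V, Function.Injective f ∧
    ∀ (i : ℕ) (h : i + 1 < n), G.Adj (f ⟨i, Nat.lt_of_succ_lt h⟩) (f ⟨i + 1, h⟩)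

/-!
A path of a tree is a geodesic, so having no path on `2 * k + 3` vertices means having diameter at
most `2 * k + 1`. An edge within distance `k` of every vertex forces this bound by the triangle
inequality. Conversely, let `xy` be the middle edge of a diametral geodesic from `a` to `b`. A
vertex `u` on the `x`-side of `xy` reaches `b` only through `xy`, so `dist u b ≤ diam` bounds
`dist u x`; symmetrically, a vertex on the `y`-side is close to `y`.
-/

open SimpleGraph

section

variable {V : Type*} {G : SimpleGraph V} {a b u v x y : V} {k l m n : ℕ}

theorem hasPathOn_succ_iff_exists_isPath :
    HasPathOn G (n + 1) ↔ ∃ (u v : V) (p : G.Walk u v), p.IsPath ∧ p.length = n := by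
  constructor
  · rintro ⟨f, hf, hadj⟩
    have hne : List.ofFn f ≠ [] := by simp
    have hchain : (List.ofFn f).IsChain G.Adj := List.isChain_ofFn.2 hadj
    refine ⟨_, _, Walk.ofSupport _ hne hchain, ?_, by simp⟩
    rw [Walk.isPath_def, Walk.support_ofSupport]
    exact List.nodup_ofFn.2 hf
  · rintro ⟨u, v, p, hp, rfl⟩
    refine ⟨fun i ↦ p.getVert i, fun i j hij ↦ Fin.ext ?_, fun i hi ↦ ?_⟩
    · exact hp.getVert_injOn (Nat.le_of_lt_succ i.2) (Nat.le_of_lt_succ j.2) hij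
    · exact p.adj_getVert_succ (Nat.lt_of_succ_lt_succ hi)

theorem isPath_iff_length_eq_dist (hG : G.IsAcyclic) {p : G.Walk u v} :
    p.IsPath ↔ p.length = G.dist u v := by
  refine ⟨fun hp ↦ ?_, p.isPath_of_length_eq_dist⟩
  obtain ⟨q, hq, hlen⟩ := p.reachable.exists_path_of_dist
  have hpq : p = q := congrArg Subtype.val ((hG.subsingleton_path u v).elim ⟨p, hp⟩ ⟨q, hq⟩)
  rw [hpq, hlen]

theorem hasPathOn_succ_iff_exists_le_dist (hG : G.IsTree) :
    HasPathOn G (n + 1) ↔ ∃ u v, n ≤ G.dist u v := by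
  rw [hasPathOn_succ_iff_exists_isPath]
  constructor
  · rintro ⟨u, v, p, hp, rfl⟩
    exact ⟨u, v, ((isPath_iff_length_eq_dist hG.isAcyclic).1 hp).le⟩
  · rintro ⟨u, v, h⟩
    obtain ⟨p, hp, hlen⟩ := hG.connected.exists_path_of_dist u v
    exact ⟨u, _, p.take n, hp.take n, by rw [Walk.take_length, hlen, min_eq_left h]⟩

theorem ediam_le_natCast_iff (hG : G.Connected) : G.ediam ≤ n ↔ ∀ u v, G.dist u v ≤ n := by
  simp_rw [ediam_le_iff, ← (hG _ _).coe_dist_eq_edist, Nat.cast_le]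

theorem not_hasPathOn_add_two_iff_ediam_le (hG : G.IsTree) :
    ¬ HasPathOn G (n + 2) ↔ G.ediam ≤ n := by
  rw [hasPathOn_succ_iff_exists_le_dist hG, ediam_le_natCast_iff hG.connected]
  simp only [not_exists, not_le, Nat.lt_succ_iff]

theorem isPath_append_cons (hG : G.IsAcyclic) {p : G.Walk u x} {q : G.Walk y v} {h : G.Adj x y}
    (hp : (p.concat h).IsPath) (hq : (q.cons h).IsPath) : (p.append (q.cons h)).IsPath := by
  rw [hG.isPath_iff_isChain] at hp hq ⊢
  rw [Walk.edges_concat, List.concat_eq_append] at hp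
  rw [Walk.edges_append, Walk.edges_cons, List.isChain_split]
  exact ⟨hp, hq⟩

theorem dist_eq_dist_add_one_add_dist_of_adj (hG : G.IsAcyclic) (hxy : G.Adj x y)
    (hu : G.dist u y = G.dist u x + 1) (hv : G.dist v x = G.dist v y + 1) :
    G.dist u v = G.dist u x + 1 + G.dist v y := by
  have hux : G.Reachable u x := (Reachable.of_dist_ne_zero (by lia)).trans hxy.symm.reachable
  have hyv : G.Reachable y v := hxy.symm.reachable.trans (Reachable.of_dist_ne_zero (by lia)).symm
  obtain ⟨p, hp⟩ := hux.exists_walk_length_eq_dist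
  obtain ⟨q, hq⟩ := hyv.exists_walk_length_eq_dist
  have hp' : (p.concat hxy).IsPath :=
    Walk.isPath_of_length_eq_dist _ (by rw [Walk.length_concat, hp, hu])
  have hq' : (q.cons hxy).IsPath :=
    Walk.isPath_of_length_eq_dist _ (by rw [Walk.length_cons, hq, dist_comm, ← hv, dist_comm])
  rw [← (isPath_iff_length_eq_dist hG).1 (isPath_append_cons hG hp' hq'), Walk.length_append,
    Walk.length_cons, hp, hq, G.dist_comm (u := y)]
  ring

theorem exists_adj_of_dist_eq_add_add_one (h : G.dist a b = m + n + 1) :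
    ∃ x y, G.Adj x y ∧ G.dist a x = m ∧ G.dist a y = m + 1 ∧
      G.dist b x = n + 1 ∧ G.dist b y = n := by
  obtain ⟨p, hp⟩ := exists_walk_of_dist_ne_zero (show G.dist a b ≠ 0 by lia)
  have hto (i : ℕ) : G.dist a (p.getVert i) = min i (m + n + 1) := by
    rw [← length_eq_dist_of_subwalk hp (p.isSubwalk_take i), Walk.take_length, hp, h]
  have hfrom (i : ℕ) : G.dist b (p.getVert i) = m + n + 1 - i := by
    rw [dist_comm, ← length_eq_dist_of_subwalk hp (p.isSubwalk_drop i), Walk.drop_length, hp, h]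
  refine ⟨p.getVert m, p.getVert (m + 1), p.adj_getVert_succ (by lia), ?_, ?_, ?_, ?_⟩ <;>
    simp only [hto, hfrom] <;> lia

theorem exists_adj_forall_dist_le_or_dist_le (hG : G.IsTree) (hab : G.dist a b = m + n + 1)
    (hmax : ∀ u v, G.dist u v ≤ G.dist a b) :
    ∃ x y, G.Adj x y ∧ ∀ u, G.dist u x ≤ m ∨ G.dist u y ≤ n := by
  obtain ⟨x, y, hxy, hax, hay, hbx, hby⟩ := exists_adj_of_dist_eq_add_add_one hab
  refine ⟨x, y, hxy, fun u ↦ ?_⟩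
  rcases hG.dist_eq_dist_add_one_of_adj u hxy with huy | hux
  · have hua : G.dist u a = G.dist u y + 1 + G.dist a x :=
      dist_eq_dist_add_one_add_dist_of_adj hG.isAcyclic hxy.symm huy (by lia)
    have := hmax u a
    lia
  · have hub : G.dist u b = G.dist u x + 1 + G.dist b y :=
      dist_eq_dist_add_one_add_dist_of_adj hG.isAcyclic hxy hux (by lia)
    have := hmax u b
    lia

theorem exists_adj_forall_min_dist_le_diam_div_two [Nontrivial V] (hG : G.IsTree)
    (hdiam : G.ediam ≠ ⊤) :
    ∃ x y, G.Adj x y ∧ ∀ u, min (G.dist u x) (G.dist u y) ≤ G.diam / 2 := by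
  obtain ⟨a, b, hab⟩ := G.exists_dist_eq_diam
  have hpos : G.diam ≠ 0 := diam_ne_zero_of_ediam_ne_top hdiam
  have hsplit : G.dist a b = G.diam / 2 + (G.diam - 1) / 2 + 1 := by lia
  obtain ⟨x, y, hxy, hclose⟩ := exists_adj_forall_dist_le_or_dist_le hG hsplit
    fun u v ↦ (dist_le_diam hdiam).trans_eq hab.symm
  refine ⟨x, y, hxy, fun u ↦ ?_⟩
  have := hclose u
  lia

theorem dist_le_of_min_dist_le (hG : G.Connected) (hxy : G.Adj x y)
    (hu : min (G.dist u x) (G.dist u y) ≤ k) (hv : min (G.dist v x) (G.dist v y) ≤ l) :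
    G.dist u v ≤ k + l + 1 := by
  have hxy' : G.dist x y = 1 := dist_eq_one_iff_adj.2 hxy
  have hux : G.dist u x ≤ G.dist u y + G.dist y x := hG.dist_triangle
  have huy : G.dist u y ≤ G.dist u x + G.dist x y := hG.dist_triangle
  have hx : G.dist u v ≤ G.dist u x + G.dist x v := hG.dist_triangle
  have hy : G.dist u v ≤ G.dist u y + G.dist y v := hG.dist_triangle
  rw [G.dist_comm (u := y) (v := x)] at hux
  rw [G.dist_comm (u := x)] at hx
  rw [G.dist_comm (u := y)] at hy
  lia

theorem exists_adj_forall_min_dist_le_iff_ediam_le [Nontrivial V] (hG : G.IsTree) :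
    (∃ x y, G.Adj x y ∧ ∀ u, min (G.dist u x) (G.dist u y) ≤ k) ↔
      G.ediam ≤ (2 * k + 1 : ℕ) := by
  constructor
  · rintro ⟨x, y, hxy, hk⟩
    refine (ediam_le_natCast_iff hG.connected).2 fun u v ↦ ?_
    exact two_mul k ▸ dist_le_of_min_dist_le hG.connected hxy (hk u) (hk v)
  · intro h
    have hdiam : G.diam ≤ 2 * k + 1 := ENat.toNat_le_of_le_natCast h
    obtain ⟨x, y, hxy, hclose⟩ :=
      exists_adj_forall_min_dist_le_diam_div_two hG (ne_top_of_le_ne_top (ENat.natCast_ne_top _) h)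
    exact ⟨x, y, hxy, fun u ↦ (hclose u).trans (by lia)⟩

end

theorem tree_no_long_path_iff_capital_edge_general {V : Type*} (T : SimpleGraph V)
    (hT : T.IsTree) (hE : ∃ x y : V, T.Adj x y) (k : ℕ) :
    ¬ HasPathOn T (2 * k + 3) ↔
      ∃ x y : V, T.Adj x y ∧ ∀ u : V, min (T.dist u x) (T.dist u y) ≤ k := by
  obtain ⟨x, y, hxy⟩ := hE
  have : Nontrivial V := hxy.nontrivial
  rw [not_hasPathOn_add_two_iff_ediam_le hT, exists_adj_forall_min_dist_le_iff_ediam_le hT]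

/-- A finite tree with at least one edge has no path on `2k+3` vertices iff
there is an edge `xy` such that every vertex is within distance `k` of `x` or `y`. -/
theorem tree_no_long_path_iff_capital_edge {V : Type*} [Fintype V] (T : SimpleGraph V)
    (hT : T.IsTree) (hE : ∃ x y : V, T.Adj x y) (k : ℕ) :
    ¬ HasPathOn T (2 * k + 3) ↔
      ∃ x y : V, T.Adj x y ∧ ∀ u : V, min (T.dist u x) (T.dist u y) ≤ k :=
  tree_no_long_path_iff_capital_edge_general T hT hE k
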